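/- Let X = Σ_{i=1}^n Rᵢ ∂/∂xᵢ be a polynomial vector field of degree at most one defined on S_{p,q}, with Rᵢ = Σ_{j=1}^n c_{ij} xⱼ + c_{i0}, and suppose the matrix A = (c_{ij})_{1≤i,j≤p+1} is nonzero. Then the set of nonzero vectors (a₁,…,a_{p+1}) ∈ ℝ^{p+1} whose associated meridian {a₁x₁ + ⋯ + a_{p+1}x_{p+1} = 0} is invariant for X spans a linear subspace of ℝ^{p+1} of dimension at most p − 1; in particular, X has at most p − 1 linearly independent invariant meridians. -/

import Mathlib

open MvPolynomial

/-- The first `p+1` coordinates of `Fin (p+q+1)`, corresponding to `x₁, …, x_{p+1}`. -/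
def idx1 (p q : ℕ) (i : Fin (p+1)) : Fin (p+q+1) := Fin.castLE (by omega) i

/-- The last `q` coordinates of `Fin (p+q+1)`, corresponding to `x_{p+2}, …, x_n`. -/
def idx2 (p q : ℕ) (j : Fin q) : Fin (p+q+1) := ⟨p+1+(j:ℕ), by omega⟩

/-- The polynomial `h = (x₁² + ⋯ + x_{p+1}² − a²)² + x_{p+2}² + ⋯ + x_n² − 1`
whose zero set is `S_{p,q}`. -/
noncomputable def hpq (p q : ℕ) (a : ℝ) : MvPolynomial (Fin (p+q+1)) ℝ :=
  ((∑ i : Fin (p+1), X (idx1 p q i) ^ 2) - C (a^2))^2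
    + (∑ j : Fin q, X (idx2 p q j) ^ 2) - 1

lemma idx1_inj (p q : ℕ) (k l : Fin (p+1)) : idx1 p q k = idx1 p q l ↔ k = l := by
  simp [idx1]

lemma idx2_ne (p q : ℕ) (j : Fin q) (l : Fin (p+1)) : idx2 p q j ≠ idx1 p q l := by
  intro h
  have := congrArg Fin.val h
  simp [idx1, idx2] at this
  omega

/-- The point `(u, 0)`. -/
noncomputable def ptU (p q : ℕ) (u : Fin (p+1) → ℝ) (j : Fin (p+q+1)) : ℝ :=
  ∑ l, if j = idx1 p q l then u l else 0

lemma ptU_idx1 (p q : ℕ) (u : Fin (p+1) → ℝ) (k) : ptU p q u (idx1 p q k) = u k := by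
  simp [ptU, idx1_inj]

lemma ptU_idx2 (p q : ℕ) (u : Fin (p+1) → ℝ) (k) : ptU p q u (idx2 p q k) = 0 := by
  simp [ptU, idx2_ne]

lemma sum_ptU (p q : ℕ) (u : Fin (p+1) → ℝ) (f : Fin (p+q+1) → ℝ) :
    ∑ j, f j * ptU p q u j = ∑ l, f (idx1 p q l) * u l := by
  simp only [ptU, Finset.mul_sum]
  rw [Finset.sum_comm]
  simp

lemma eval_hpq (p q : ℕ) (a : ℝ) (u : Fin (p+1) → ℝ) :
    eval (ptU p q u) (hpq p q a) = ((∑ i, u i ^ 2) - a^2)^2 - 1 := by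
  simp [hpq, ptU_idx1, ptU_idx2]

lemma eval_pderiv_hpq (p q : ℕ) (a : ℝ) (u : Fin (p+1) → ℝ) (i) :
    eval (ptU p q u) (pderiv i (hpq p q a)) = 4 * ((∑ i, u i ^ 2) - a^2) * ptU p q u i := by
  have h1 : ∀ l, eval (ptU p q u) (pderiv i (X (idx1 p q l) ^ 2 : MvPolynomial _ ℝ))
      = 2 * (if i = idx1 p q l then u l else 0) := by
    intro l
    rw [Derivation.leibniz_pow]
    by_cases h : i = idx1 p q l
    · subst h; simp [ptU_idx1]
    · simp [pderiv_X_of_ne (Ne.symm h), h]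
  have h2 : ∀ l, eval (ptU p q u) (pderiv i (X (idx2 p q l) ^ 2 : MvPolynomial _ ℝ)) = 0 := by
    intro l
    rw [Derivation.leibniz_pow]
    simp [ptU_idx2]
  unfold hpq
  rw [map_sub, map_add, Derivation.leibniz_pow, map_sub (pderiv (R := ℝ) i) _ (C (a ^ 2)), pderiv_C]
  simp only [map_sub, map_add, map_sum, h1, h2, smul_eq_mul, map_mul, map_nsmul, pderiv_C,
    pderiv_one, map_zero, eval_X, eval_C, map_pow, ptU_idx1, Finset.sum_const_zero, 
    ← Finset.mul_sum]
  simp only [ptU, nsmul_eq_mul]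
  push_cast
  ring

open Matrix in
lemma skew_finrank {m : ℕ} (A : Matrix (Fin m) (Fin m) ℝ) (hA : A ≠ 0)
    (hs : ∀ w, w ⬝ᵥ (A *ᵥ w) = 0) :
    Module.finrank ℝ (LinearMap.ker A.mulVecLin) + 2 ≤ m := by
  have hsk : ∀ x y, x ⬝ᵥ (A *ᵥ y) = - (y ⬝ᵥ (A *ᵥ x)) := by
    intro x y
    have := hs (x + y)
    simp only [mulVec_add, dotProduct_add, add_dotProduct, hs] at this
    linarith
  obtain ⟨x, hx⟩ : ∃ x, A *ᵥ x ≠ 0 := by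
    by_contra! h
    apply hA
    apply Matrix.ext_of_mulVec_single
    intro i
    rw [h, Matrix.zero_mulVec]
  set y := A *ᵥ x with hy
  have hyy : y ⬝ᵥ y ≠ 0 := by simpa [dotProduct_self_eq_zero] using hx
  have hz : A *ᵥ y ≠ 0 := by
    intro h
    apply hyy
    nth_rw 2 [hy]
    rw [hsk, h]; simp
  have hzz : (A *ᵥ y) ⬝ᵥ (A *ᵥ y) ≠ 0 := by simpa [dotProduct_self_eq_zero] using hz
  have hli : LinearIndependent ℝ ![A.mulVecLin.rangeRestrict x, A.mulVecLin.rangeRestrict y] := by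
    rw [LinearIndependent.pair_iff]
    intro s t h
    have h' : s • y + t • (A *ᵥ y) = 0 := by
      have := congrArg Subtype.val h
      simpa using this
    have e1 := congrArg (fun v => y ⬝ᵥ v) h'
    have e2 := congrArg (fun v => (A *ᵥ y) ⬝ᵥ v) h'
    simp only [dotProduct_add, dotProduct_smul, hs, smul_eq_mul, dotProduct_zero] at e1 e2
    rw [dotProduct_comm, hs] at e2
    constructor
    · have : s * (y ⬝ᵥ y) = 0 := by linarith
      exact (mul_eq_zero.mp this).resolve_right hyy
    · have : t * ((A *ᵥ y) ⬝ᵥ (A *ᵥ y)) = 0 := by linarith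
      exact (mul_eq_zero.mp this).resolve_right hzz
  have h2 := hli.fintype_card_le_finrank
  have h3 := LinearMap.finrank_range_add_finrank_ker A.mulVecLin
  simp at h2 h3
  omega

open Matrix in
/-- For a degree-one vector field `X = Σ Rᵢ ∂/∂xᵢ` defined on `S_{p,q}`, with
`Rᵢ = Σⱼ c_{ij}xⱼ + c_{i0}` and nonzero matrix `A = (c_{ij})_{1≤i,j≤p+1}`, the set of
nonzero vectors `(a₁,…,a_{p+1})` whose meridian `{a₁x₁ + ⋯ + a_{p+1}x_{p+1} = 0}` is
invariant for `X` spans a subspace of `ℝ^{p+1}` of dimension at most `p − 1`: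
`X` has at most `p − 1` linearly independent invariant meridians. -/
theorem stmt10 (p q : ℕ) (hp : 1 ≤ p) (hq : 1 ≤ q) (a : ℝ) (ha : 1 < a)
    (R : Fin (p+q+1) → MvPolynomial (Fin (p+q+1)) ℝ)
    (c : Fin (p+q+1) → Fin (p+q+1) → ℝ) (c0 : Fin (p+q+1) → ℝ)
    (hR : ∀ i, R i = (∑ j, C (c i j) * X j) + C (c0 i))
    (K : MvPolynomial (Fin (p+q+1)) ℝ)
    (hinv : (∑ i, R i * pderiv i (hpq p q a)) = K * hpq p q a)
    (hA : (Matrix.of fun i j : Fin (p+1) => c (idx1 p q i) (idx1 p q j)) ≠ 0) :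
    Module.finrank ℝ
      ↥(Submodule.span ℝ {av : Fin (p+1) → ℝ | av ≠ 0 ∧
        ∃ K' : MvPolynomial (Fin (p+q+1)) ℝ,
          (∑ i : Fin (p+1), C (av i) * R (idx1 p q i))
            = K' * (∑ i : Fin (p+1), C (av i) * X (idx1 p q i))}) ≤ p - 1 := by
  set A : Matrix (Fin (p+1)) (Fin (p+1)) ℝ :=
    Matrix.of fun i j : Fin (p+1) => c (idx1 p q i) (idx1 p q j) with hAdef
  set r : Fin (p+1) → ℝ := fun i => c0 (idx1 p q i) with hr
  have hRe : ∀ u k, eval (ptU p q u) (R (idx1 p q k)) = (A *ᵥ u) k + r k := by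
    intro u k
    rw [hR]
    simp [sum_ptU, mulVec, dotProduct, hAdef, hr]
  have hdot : ∀ u : Fin (p+1) → ℝ, ∑ i, u i ^ 2 = u ⬝ᵥ u := by
    intro u; simp [dotProduct, sq]
  have key : ∀ u : Fin (p+1) → ℝ, u ⬝ᵥ u = a^2 + 1 → u ⬝ᵥ (A *ᵥ u) + u ⬝ᵥ r = 0 := by
    intro u hu
    have h := congrArg (eval (ptU p q u)) hinv
    simp only [map_sum, map_mul, eval_hpq, eval_pderiv_hpq, hdot, hu] at h
    have h' : ∑ i, (4 * eval (ptU p q u) (R i)) * ptU p q u i = 0 := by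
      rw [show eval (ptU p q u) K * ((a^2+1-a^2)^2-1) = 0 by ring] at h
      rw [← h]
      apply Finset.sum_congr rfl
      intros; ring
    rw [sum_ptU] at h'
    simp only [hRe] at h'
    have : 4 * (u ⬝ᵥ (A *ᵥ u) + u ⬝ᵥ r) = 0 := by
      rw [← h', dotProduct, dotProduct, ← Finset.sum_add_distrib, Finset.mul_sum]
      apply Finset.sum_congr rfl
      intros; ring
    linarith
  have key2 : ∀ u : Fin (p+1) → ℝ, u ⬝ᵥ u = a^2 + 1 → u ⬝ᵥ (A *ᵥ u) = 0 ∧ u ⬝ᵥ r = 0 := by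
    intro u hu
    have h1 := key u hu
    have h2 := key (-u) (by simpa using hu)
    simp [mulVec_neg] at h2
    constructor <;> linarith
  have key3 : ∀ u : Fin (p+1) → ℝ, u ⬝ᵥ (A *ᵥ u) = 0 ∧ u ⬝ᵥ r = 0 := by
    intro u
    by_cases hu : u = 0
    · simp [hu]
    have hpos : 0 < u ⬝ᵥ u := by
      rw [← hdot]
      obtain ⟨i, hi⟩ := Function.ne_iff.mp hu
      exact Finset.sum_pos' (fun _ _ => sq_nonneg _)
        ⟨i, Finset.mem_univ _, by have : u i ≠ 0 := hi; positivity⟩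
    set t := Real.sqrt ((a^2+1) / (u ⬝ᵥ u)) with ht
    have htpos : 0 < t := Real.sqrt_pos.mpr (by positivity)
    have htt : t * t = (a^2+1) / (u ⬝ᵥ u) := Real.mul_self_sqrt (by positivity)
    obtain ⟨h1, h2⟩ := key2 (t • u) (by
      simp only [smul_dotProduct, dotProduct_smul, smul_eq_mul]
      rw [← mul_assoc, htt]; field_simp)
    simp only [mulVec_smul, smul_dotProduct, dotProduct_smul, smul_eq_mul, mul_eq_zero,
      htpos.ne', false_or] at h1 h2
    exact ⟨h1, h2⟩
  have hfin := skew_finrank A hA (fun w => (key3 w).1)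
  have hsk : ∀ x y, x ⬝ᵥ (A *ᵥ y) = - (y ⬝ᵥ (A *ᵥ x)) := by
    intro x y
    have := (key3 (x + y)).1
    simp only [mulVec_add, dotProduct_add, add_dotProduct, (key3 _).1] at this
    linarith
  refine le_trans (Submodule.finrank_mono (t := LinearMap.ker A.mulVecLin) ?_) (by omega)
  rw [Submodule.span_le]
  rintro v ⟨hv, K', hK⟩
  have hv2 : v ⬝ᵥ v ≠ 0 := by simpa [dotProduct_self_eq_zero] using hv
  have hperp : ∀ u, v ⬝ᵥ u = 0 → v ⬝ᵥ (A *ᵥ u) = 0 := by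
    intro u hu
    have h := congrArg (eval (ptU p q u)) hK
    simp only [map_sum, map_mul, eval_C, eval_X, hRe, ptU_idx1] at h
    change v ⬝ᵥ (A *ᵥ u + r) = _ * (v ⬝ᵥ u) at h
    rw [hu, dotProduct_add, (key3 v).2] at h
    simpa using h
  have hall : ∀ u, v ⬝ᵥ (A *ᵥ u) = 0 := by
    intro u
    have h := hperp (u - ((v ⬝ᵥ u) / (v ⬝ᵥ v)) • v) (by
      rw [dotProduct_sub, dotProduct_smul, smul_eq_mul]; field_simp; simp)
    rw [mulVec_sub, mulVec_smul, dotProduct_sub, dotProduct_smul, (key3 v).1] at h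
    simpa using h
  have : A *ᵥ v = 0 := by
    rw [← dotProduct_self_eq_zero, hsk, hall, neg_zero]
  simpa using this
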